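/- Let M be a reduced G_C-perfect R-module of G_C-dimension n, and assume Tor_1^R(Tr(M), C) = 0. Then Ext_R^i(λM ⊗_R C, C) ≅ Ext_R^{i+n}(Ext_R^n(M,C), C) for all i > 0. -/

import Mathlib

open CategoryTheory TensorProduct

noncomputable section

universe u

variable (R : Type u) [CommRing R]

/-- The `i`-th Ext module `Ext_R^i(M, N)`. -/
def ExtM (M N : ModuleCat.{u} R) (i : ℕ) : ModuleCat.{u} R :=
  ((Ext R (ModuleCat.{u} R) i).obj (Opposite.op M)).obj N

/-- The `i`-th Tor module `Tor_i^R(M, N)`. -/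
def TorM (M N : ModuleCat.{u} R) (i : ℕ) : ModuleCat.{u} R :=
  ((Tor (ModuleCat.{u} R) i).obj M).obj N

/-- The biduality (evaluation) map `M → Hom_R(Hom_R(M, C), C)`. -/
def bidualityMap (C M : ModuleCat.{u} R) :
    ↥M →ₗ[R] ((↥M →ₗ[R] ↥C) →ₗ[R] ↥C) :=
  (LinearMap.id : (↥M →ₗ[R] ↥C) →ₗ[R] (↥M →ₗ[R] ↥C)).flip

/-- `C` is a semidualizing `R`-module. -/
def IsSemidualizing (C : ModuleCat.{u} R) : Prop :=
  Module.Finite R ↥C ∧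
  Function.Bijective (fun r : R => (r • LinearMap.id : ↥C →ₗ[R] ↥C)) ∧
  ∀ i : ℕ, 0 < i → Subsingleton (ExtM R C C i)

/-- `M` is totally `C`-reflexive. -/
def IsTotallyCReflexive (C M : ModuleCat.{u} R) : Prop :=
  Module.Finite R ↥M ∧
  Function.Bijective (bidualityMap R C M) ∧
  (∀ i : ℕ, 0 < i → Subsingleton (ExtM R M C i)) ∧
  (∀ i : ℕ, 0 < i → Subsingleton (ExtM R (ModuleCat.of R (↥M →ₗ[R] ↥C)) C i))

/-- `G_C`-dimension of `M` is at most `n`: there is an exact sequence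
`0 → X_n → ⋯ → X_0 → M → 0` with each `X_i` totally `C`-reflexive. -/
def gcdimLE (C : ModuleCat.{u} R) : ℕ → ModuleCat.{u} R → Prop
  | 0, M => IsTotallyCReflexive R C M
  | n+1, M => ∃ (X K : ModuleCat.{u} R) (f : ↥K →ₗ[R] ↥X) (g : ↥X →ₗ[R] ↥M),
      Function.Injective f ∧ Function.Surjective g ∧
      LinearMap.ker g = LinearMap.range f ∧
      IsTotallyCReflexive R C X ∧ gcdimLE C n K

/-- The `G_C`-dimension of `M`, as an element of `ℕ∞`. -/
def gcdim (C M : ModuleCat.{u} R) : ℕ∞ :=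
  sInf ((fun n : ℕ => (n : ℕ∞)) '' {n | gcdimLE R C n M})

/-- `grade_R(M) = inf { i | Ext_R^i(M, R) ≠ 0 }`, with `grade 0 = ∞`. -/
def gradeR (M : ModuleCat.{u} R) : ℕ∞ :=
  sInf ((fun i : ℕ => (i : ℕ∞)) ''
    {i | ¬ Subsingleton (ExtM R M (ModuleCat.of R R) i)})

/-- Reduced grade of `M` with respect to `C`. -/
def rgrade (C M : ModuleCat.{u} R) : ℕ∞ :=
  sInf ((fun i : ℕ => (i : ℕ∞)) ''
    {i | 0 < i ∧ ¬ Subsingleton (ExtM R M C i)})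

/-- `M` is reduced `G_C`-perfect. -/
def IsReducedGCPerfect (C M : ModuleCat.{u} R) : Prop :=
  gcdim R C M ≠ ⊤ ∧ rgrade R C M = gcdim R C M

/-- `M` is `G_C`-perfect. -/
def IsGCPerfect (C M : ModuleCat.{u} R) : Prop :=
  gcdim R C M ≠ ⊤ ∧ gradeR R M = gcdim R C M

/-- `π : P → M` is a projective cover: `P` projective, `π` surjective with superfluous kernel. -/
def IsProjectiveCover {P M : ModuleCat.{u} R} (π : ↥P →ₗ[R] ↥M) : Prop :=
  Module.Projective R ↥P ∧ Function.Surjective π ∧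
  ∀ N : Submodule R ↥P, N ⊔ LinearMap.ker π = ⊤ → N = ⊤

/-- `P₁ →d P₀ →π M → 0` is a minimal projective presentation of `M`. -/
def IsMinimalPresentation {P1 P0 M : ModuleCat.{u} R}
    (d : ↥P1 →ₗ[R] ↥P0) (π : ↥P0 →ₗ[R] ↥M) : Prop :=
  Module.Finite R ↥P1 ∧ Module.Finite R ↥P0 ∧
  IsProjectiveCover R π ∧
  LinearMap.range d = LinearMap.ker π ∧
  Module.Projective R ↥P1 ∧
  ∀ N : Submodule R ↥P1, N ⊔ LinearMap.ker d = ⊤ → N = ⊤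

/-- `T` is (a module isomorphic to) the transpose `Tr_C(M)` of `M` with respect to `C`,
computed from a minimal projective presentation of `M`. -/
def IsTransposeC (C M T : ModuleCat.{u} R) : Prop :=
  ∃ (P1 P0 : ModuleCat.{u} R) (d : ↥P1 →ₗ[R] ↥P0) (π : ↥P0 →ₗ[R] ↥M),
    IsMinimalPresentation R d π ∧
    Nonempty (↥T ≃ₗ[R]
      ((↥P1 →ₗ[R] ↥C) ⧸ LinearMap.range (LinearMap.lcomp R ↥C d)))

/-- `T` is the usual Auslander transpose `Tr(M) = Tr_R(M)`. -/
def IsTranspose (M T : ModuleCat.{u} R) : Prop :=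
  IsTransposeC R (ModuleCat.of R R) M T

/-- `S` is (a module isomorphic to) the first syzygy `Ω N`, i.e. the kernel of a
projective cover of `N`. -/
def IsSyzygyOf (N S : ModuleCat.{u} R) : Prop :=
  ∃ (P : ModuleCat.{u} R) (π : ↥P →ₗ[R] ↥N),
    Module.Finite R ↥P ∧ IsProjectiveCover R π ∧
    Nonempty (↥S ≃ₗ[R] LinearMap.ker π)

/-- `S` is (a module isomorphic to) the `n`-th syzygy `Ωⁿ M`. -/
def IsNthSyzygy : ℕ → ModuleCat.{u} R → ModuleCat.{u} R → Prop
  | 0, M, S => Nonempty (↥S ≃ₗ[R] ↥M)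
  | n+1, M, S => ∃ K : ModuleCat.{u} R, IsNthSyzygy n M K ∧ IsSyzygyOf R K S

/-- `L` is (a module isomorphic to) `λ M = Ω Tr M`. -/
def IsLambda (M L : ModuleCat.{u} R) : Prop :=
  ∃ T : ModuleCat.{u} R, IsTranspose R M T ∧ IsSyzygyOf R T L

/-- `M` is horizontally linked, i.e. `M ≅ λλM`. -/
def IsHorizontallyLinked (M : ModuleCat.{u} R) : Prop :=
  ∃ L L2 : ModuleCat.{u} R, IsLambda R M L ∧ IsLambda R L L2 ∧
    Nonempty (↥M ≃ₗ[R] ↥L2)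

/-- `M` is stable: it has no non-zero projective direct summand. -/
def IsStable (M : ModuleCat.{u} R) : Prop :=
  ∀ (P N : ModuleCat.{u} R), Module.Projective R ↥P →
    Nonempty (↥M ≃ₗ[R] (↥P × ↥N)) → Subsingleton ↥P

/-- `N` belongs to the Auslander class `A_C`. -/
def MemAuslanderClass (C N : ModuleCat.{u} R) : Prop :=
  Function.Bijective (TensorProduct.mk R ↥N ↥C) ∧
  (∀ i : ℕ, 0 < i → Subsingleton (TorM R C N i)) ∧
  (∀ i : ℕ, 0 < i → Subsingleton
    (ExtM R C (ModuleCat.of R (↥N ⊗[R] ↥C)) i))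

/-- `R` is semiperfect: every finite `R`-module has a projective cover. -/
def IsSemiperfectRing : Prop :=
  ∀ M : ModuleCat.{u} R, Module.Finite R ↥M →
    ∃ (P : ModuleCat.{u} R) (π : ↥P →ₗ[R] ↥M),
      Module.Finite R ↥P ∧ IsProjectiveCover R π

/-- Depth over a local ring, via Ext from the residue field. -/
def rdepth [IsLocalRing R] (M : ModuleCat.{u} R) : ℕ∞ :=
  sInf ((fun i : ℕ => (i : ℕ∞)) ''
    {i | ¬ Subsingleton
      (ExtM R (ModuleCat.of R (IsLocalRing.ResidueField R)) M i)})

/-- Projective dimension at most `n`. -/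
def pdimLE : ℕ → ModuleCat.{u} R → Prop
  | 0, M => Module.Projective R ↥M
  | n+1, M => ∃ (X K : ModuleCat.{u} R) (f : ↥K →ₗ[R] ↥X) (g : ↥X →ₗ[R] ↥M),
      Function.Injective f ∧ Function.Surjective g ∧
      LinearMap.ker g = LinearMap.range f ∧
      Module.Projective R ↥X ∧ pdimLE n K

/-- Projective dimension, as an element of `ℕ∞`. -/
def pdim (M : ModuleCat.{u} R) : ℕ∞ :=
  sInf ((fun n : ℕ => (n : ℕ∞)) '' {n | pdimLE R n M})

/-- `M` is `C`-`k`-torsionless. -/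
def IsCkTorsionless (C M : ModuleCat.{u} R) (k : ℕ) : Prop :=
  k = 0 ∨ ∀ T : ModuleCat.{u} R, IsTransposeC R C M T →
    ∀ i : ℕ, 1 ≤ i → i ≤ k → Subsingleton (ExtM R T C i)

/-- `M` is a `C`-syzygy: it embeds into `P ⊗_R C` with `P` finite projective. -/
def IsCSyzygy (C M : ModuleCat.{u} R) : Prop :=
  ∃ (P : ModuleCat.{u} R), Module.Finite R ↥P ∧ Module.Projective R ↥P ∧
    ∃ f : ↥M →ₗ[R] (↥P ⊗[R] ↥C), Function.Injective f


/-- There is an exact sequence `0 → N → X_k → ⋯ → X_1 → M → 0` of finite `R`-modules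
with `Ext_R^i(X_j, C) = 0` for all `i > 0` and all `j`. -/
def ExtVanishingChain (C : ModuleCat.{u} R) : ℕ → ModuleCat.{u} R → ModuleCat.{u} R → Prop
  | 0, N, M => Nonempty (↥N ≃ₗ[R] ↥M)
  | k+1, N, M => ∃ (X K : ModuleCat.{u} R) (f : ↥K →ₗ[R] ↥X) (g : ↥X →ₗ[R] ↥M),
      Function.Injective f ∧ Function.Surjective g ∧
      LinearMap.ker g = LinearMap.range f ∧
      Module.Finite R ↥X ∧ (∀ i : ℕ, 0 < i → Subsingleton (ExtM R X C i)) ∧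
      ExtVanishingChain C k N K

/-!
Write `X^C / M^C` for the cokernel of `Hom(M, C) → Hom(X, C)` along a surjection `X → M`.

If `P₁ → P₀ → M → 0` is the presentation defining `Tr M`, then `Tr M ⊗ C` is the cokernel of
`P₀^C → P₁^C`. As `Tor_1(Tr M, C) = 0`, the sequence `0 → λM ⊗ C → P ⊗ C → Tr M ⊗ C → 0` is exact,
and `P ⊗ C` and `P₁^C` have no higher `Ext` into `C`. Hence both `Ext^i(λM ⊗ C, C)` and
`Ext^i(P₀^C / M^C, C)` are `Ext^{i+1}(Tr M ⊗ C, C)`.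

The module `Ext^i(P₀^C / M^C, C)` is the cokernel of the biduality map of `M` for `i = 1` and
`Ext^{i-1}(M^C, C)` for `i > 1`, so `P₀` may be replaced by the first term of a `G_C`-resolution
`0 → K → X₀ → M → 0`. If `n = 1`, then `0 → X₀^C / M^C → K^C → Ext^1(M, C) → 0` is exact with
`K` totally `C`-reflexive, and one dimension shift suffices. If `n > 1`, then `X₀^C / M^C = K^C`
and `Ext^i(K^C, C)` is `Ext^{i+1}(X₁^C / K^C, C)` for the next term `X₁ → K` of the resolution, so
induction on `n` applies to `K`, because `Ext^{n-1}(K, C) = Ext^n(M, C)`.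
-/

section AbelianExt

open Opposite

universe w v

/-- The homology of a short complex of modules, computed by a surjection `φ` from the module of
cycles whose kernel consists of the boundaries. -/
def homologyEquivOfSurjective {k : Type*} [Ring k] {S : ShortComplex (ModuleCat.{v} k)}
    {E : Type*} [AddCommGroup E] [Module k E] (φ : LinearMap.ker S.g.hom →ₗ[k] E)
    (hφ : Function.Surjective φ) (hker : LinearMap.range S.moduleCatToCycles = LinearMap.ker φ) :
    S.homology ≃ₗ[k] E :=
  S.moduleCatHomologyIso.toLinearEquiv ≪≫ₗ Submodule.quotEquivOfEq _ _ hker ≪≫ₗ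
    φ.quotKerEquivOfSurjective hφ

variable {k : Type*} [Ring k] {𝒜 : Type*} [Category.{v} 𝒜] [Abelian 𝒜] [Linear k 𝒜]
  [HasExt.{w} 𝒜]

lemma extMk_smul {X Y : 𝒜} (P : ProjectiveResolution X) {n m : ℕ} (f : P.complex.X n ⟶ Y)
    (hm : n + 1 = m) (hf : P.complex.d m n ≫ f = 0) (r : k) :
    P.extMk (r • f) m hm (by rw [Linear.comp_smul, hf, smul_zero]) = r • P.extMk f m hm hf := by
  simp only [Abelian.Ext.smul_eq_comp_mk₀, P.extMk_comp_mk₀, Linear.comp_smul, Category.comp_id]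

/-- The class in `Ext` of a cocycle on a projective resolution, as a linear map. -/
def extMkLinearMap {X : 𝒜} (P : ProjectiveResolution X) (Y : 𝒜) (n : ℕ) :
    LinearMap.ker (((P.complex.linearYonedaObj k Y).sc' n (n + 1) (n + 2)).g.hom) →ₗ[k]
      Abelian.Ext X Y (n + 1) where
  toFun x := P.extMk (n := n + 1) x.1 (n + 2) rfl x.2
  map_add' _ _ := (P.add_extMk _ _ _ _ _ _).symm
  map_smul' r _ := extMk_smul P _ _ _ r

variable (k) in
/-- The comparison between `Ext` as a derived functor and `Ext` as morphisms in the derived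
category; the latter comes with long exact sequences. -/
def extSuccLinearEquiv [EnoughProjectives 𝒜] (X Y : 𝒜) (n : ℕ) :
    ((Ext k 𝒜 (n + 1)).obj (op X)).obj Y ≃ₗ[k] Abelian.Ext.{w} X Y (n + 1) :=
  let P := projectiveResolution X
  (P.isoExt (n + 1) Y ≪≫ (P.complex.linearYonedaObj k Y).homologyIsoSc' n (n + 1) (n + 2)
      (by simp) (by simp)).toLinearEquiv ≪≫ₗ
    homologyEquivOfSurjective (extMkLinearMap P Y n)
      (fun α ↦
        have ⟨f, hf, hα⟩ := P.extMk_surjective α (n + 2) rfl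
        ⟨⟨f, hf⟩, hα⟩)
      (by
        ext x
        refine (?_ : x ∈ _ ↔ _).trans (P.extMk_eq_zero_iff x.1 (n + 2) rfl x.2 n rfl).symm
        exact exists_congr fun _ ↦ Subtype.ext_iff)

variable {S : ShortComplex 𝒜} (hS : S.ShortExact) {Y : 𝒜}

lemma extClass_precomp_bijective (k : Type*) [CommRing k] [Linear k 𝒜] {n m : ℕ} (h : 1 + n = m)
    (hn : Subsingleton (Abelian.Ext S.X₂ Y n)) (hm : Subsingleton (Abelian.Ext S.X₂ Y m)) :
    Function.Bijective (Abelian.Ext.precompOfLinear hS.extClass k Y h) := by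
  refine ⟨(injective_iff_map_eq_zero _).2 fun x hx ↦ ?_, fun x ↦
    Abelian.Ext.contravariant_sequence_exact₃ hS Y x (Subsingleton.elim _ _) h⟩
  obtain ⟨y, rfl⟩ := Abelian.Ext.contravariant_sequence_exact₁ hS Y x h hx
  rw [Subsingleton.elim y 0, Abelian.Ext.comp_zero]

lemma extClass_comp_mk₀_eq_zero_iff (φ : S.X₁ ⟶ Y) :
    hS.extClass.comp (Abelian.Ext.mk₀ φ) (add_zero 1) = 0 ↔ ∃ ψ : S.X₂ ⟶ Y, S.f ≫ ψ = φ := by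
  constructor
  · intro h
    obtain ⟨y, hy⟩ := Abelian.Ext.contravariant_sequence_exact₁ hS Y _ _ h
    obtain ⟨ψ, rfl⟩ := (Abelian.Ext.mk₀_bijective _ _).2 y
    rw [Abelian.Ext.mk₀_comp_mk₀] at hy
    exact ⟨ψ, (Abelian.Ext.mk₀_bijective _ _).1 hy⟩
  · rintro ⟨ψ, rfl⟩
    rw [← Abelian.Ext.mk₀_comp_mk₀]
    exact hS.extClass_comp_assoc _

lemma exists_extClass_comp_mk₀_eq (h : Subsingleton (Abelian.Ext S.X₂ Y 1))
    (x : Abelian.Ext S.X₃ Y 1) :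
    ∃ φ : S.X₁ ⟶ Y, hS.extClass.comp (Abelian.Ext.mk₀ φ) (add_zero 1) = x := by
  obtain ⟨y, rfl⟩ := Abelian.Ext.contravariant_sequence_exact₃ hS Y x (Subsingleton.elim _ _)
    (add_zero 1)
  obtain ⟨φ, rfl⟩ := (Abelian.Ext.mk₀_bijective _ _).2 y
  exact ⟨φ, rfl⟩

lemma subsingleton_ext_of_sum_comp_eq_id {X Z : 𝒜} {ι : Type*} [Fintype ι] (a : ι → (X ⟶ Z))
    (b : ι → (Z ⟶ X)) (h : ∑ j, a j ≫ b j = 𝟙 X) {n : ℕ}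
    (hZ : Subsingleton (Abelian.Ext Z Y n)) : Subsingleton (Abelian.Ext X Y n) := by
  refine subsingleton_of_forall_eq 0 fun x ↦ ?_
  calc x = (∑ j, Abelian.Ext.mk₀ (a j ≫ b j)).comp x (zero_add n) := by
        rw [← Abelian.Ext.mk₀_sum, h, Abelian.Ext.mk₀_id_comp]
    _ = ∑ j, (Abelian.Ext.mk₀ (a j)).comp ((Abelian.Ext.mk₀ (b j)).comp x (zero_add n))
          (zero_add n) := by
        simp only [Abelian.Ext.sum_comp, Abelian.Ext.mk₀_comp_mk₀_assoc]
    _ = 0 := Finset.sum_eq_zero fun j _ ↦ by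
        rw [Subsingleton.elim ((Abelian.Ext.mk₀ (b j)).comp x _) 0, Abelian.Ext.comp_zero]

end AbelianExt

section ExtOfModules

variable {R} {A B D : Type u} [AddCommGroup A] [Module R A] [AddCommGroup B] [Module R B]
  [AddCommGroup D] [Module R D] {C : ModuleCat.{u} R}

/-- The vanishing of all higher `Ext_R^i(X, C)`. Modules in the first variable are kept unbundled,
since most of them arise as quotients, tensor products or modules of homomorphisms. -/
def IsExtAcyclic (C : ModuleCat.{u} R) (X : Type u) [AddCommGroup X] [Module R X] : Prop :=
  ∀ i : ℕ, 0 < i → Subsingleton (ExtM R (.of R X) C i)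

/-- The isomorphism of `Ext` modules induced by an isomorphism of first variables. -/
def extMCongr (e : A ≃ₗ[R] B) (C : ModuleCat.{u} R) (i : ℕ) :
    ExtM R (.of R A) C i ≃ₗ[R] ExtM R (.of R B) C i :=
  (((Ext R (ModuleCat.{u} R) i).mapIso e.symm.toModuleIso.op).app C).toLinearEquiv

lemma subsingleton_extM_succ_iff {X Y : ModuleCat.{u} R} {i : ℕ} :
    Subsingleton (ExtM R X Y (i + 1)) ↔ Subsingleton (Abelian.Ext.{u} X Y (i + 1)) :=
  (extSuccLinearEquiv R X Y i).subsingleton_congr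

lemma IsExtAcyclic.of_sum_comp_eq_id {X : ModuleCat.{u} R} (hX : IsExtAcyclic C X) {ι : Type*}
    [Fintype ι] (a : ι → A →ₗ[R] X) (b : ι → X →ₗ[R] A) (h : ∑ j, b j ∘ₗ a j = LinearMap.id) :
    IsExtAcyclic C A := by
  rintro (_ | i) hi
  · exact absurd hi (lt_irrefl 0)
  · refine subsingleton_extM_succ_iff.2 <| subsingleton_ext_of_sum_comp_eq_id
      (fun j ↦ ModuleCat.ofHom (a j)) (fun j ↦ ModuleCat.ofHom (b j)) ?_
      (subsingleton_extM_succ_iff.1 (hX (i + 1) hi))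
    ext : 1
    simp only [ModuleCat.hom_sum, ModuleCat.hom_comp, ModuleCat.hom_ofHom, ModuleCat.hom_id, h]

section ShortExact

variable {f : A →ₗ[R] B} {g : B →ₗ[R] D} (hf : Function.Injective f)
  (hg : Function.Surjective g) (hfg : Function.Exact f g)

include hf hg hfg in
lemma shortExact_ofHom : (ShortComplex.mk (ModuleCat.ofHom f) (ModuleCat.ofHom g)
    (ModuleCat.hom_ext hfg.linearMap_comp_eq_zero)).ShortExact :=
  ModuleCat.shortComplex_shortExact _ hfg hf hg

/-- Dimension shifting along a short exact sequence whose middle term is acyclic. -/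
def extShiftEquiv (hB : IsExtAcyclic C B) (i : ℕ) :
    ExtM R (.of R A) C (i + 1) ≃ₗ[R] ExtM R (.of R D) C (i + 2) :=
  extSuccLinearEquiv R _ _ i ≪≫ₗ
    .ofBijective _ (extClass_precomp_bijective (shortExact_ofHom hf hg hfg) R
      (add_comm 1 (i + 1)) (subsingleton_extM_succ_iff.1 (hB (i + 1) i.succ_pos))
      (subsingleton_extM_succ_iff.1 (hB (i + 2) (i + 1).succ_pos))) ≪≫ₗ
    (extSuccLinearEquiv R _ _ (i + 1)).symm

/-- The cokernel of the transpose `Hom(Y, C) → Hom(X, C)` of a linear map `X → Y`. If `X → Y` is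
a projective presentation of `M`, this is the transpose of `M` with respect to `C`. -/
abbrev DualCoker (C : Type*) [AddCommGroup C] [Module R C] {X Y : Type*} [AddCommGroup X]
    [Module R X] [AddCommGroup Y] [Module R Y] (f : X →ₗ[R] Y) : Type _ :=
  (X →ₗ[R] C) ⧸ LinearMap.range (LinearMap.lcomp R C f)

/-- The connecting homomorphism `Hom(A, C) → Ext^1(D, C)` of a short exact sequence. -/
def homToExtOne (C : ModuleCat.{u} R) :
    (A →ₗ[R] C) →ₗ[R] Abelian.Ext.{u} (ModuleCat.of R D) C 1 :=
  Abelian.Ext.precompOfLinear (shortExact_ofHom hf hg hfg).extClass R C (add_zero 1) ∘ₗ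
    (Abelian.Ext.linearEquiv₀ (R := R)).symm.toLinearMap ∘ₗ
    (ModuleCat.homLinearEquiv (S := R) (M := .of R A)).symm.toLinearMap

lemma range_lcomp_eq_ker_homToExtOne :
    LinearMap.range (LinearMap.lcomp R C f) = LinearMap.ker (homToExtOne hf hg hfg C) := by
  ext φ
  refine Iff.trans ?_
    (extClass_comp_mk₀_eq_zero_iff (shortExact_ofHom hf hg hfg) (ModuleCat.ofHom φ)).symm
  exact ⟨fun ⟨ψ, h⟩ ↦ ⟨ModuleCat.ofHom ψ, ModuleCat.hom_ext h⟩,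
    fun ⟨ψ, h⟩ ↦ ⟨ψ.hom, congrArg ModuleCat.Hom.hom h⟩⟩

lemma homToExtOne_surjective (hB : Subsingleton (ExtM R (.of R B) C 1)) :
    Function.Surjective (homToExtOne hf hg hfg C) := fun x ↦
  have ⟨φ, hφ⟩ := exists_extClass_comp_mk₀_eq (shortExact_ofHom hf hg hfg)
    (subsingleton_extM_succ_iff.1 hB) x
  ⟨φ.hom, hφ⟩

/-- The degree zero case of `extShiftEquiv`. -/
def dualCokerEquivExtOne (hB : Subsingleton (ExtM R (.of R B) C 1)) :
    DualCoker C f ≃ₗ[R] ExtM R (.of R D) C 1 :=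
  Submodule.quotEquivOfEq _ _ (range_lcomp_eq_ker_homToExtOne hf hg hfg) ≪≫ₗ
    (homToExtOne hf hg hfg C).quotKerEquivOfSurjective (homToExtOne_surjective hf hg hfg hB) ≪≫ₗ
    (extSuccLinearEquiv R _ _ 0).symm

end ShortExact

end ExtOfModules

section DualBasis

variable {R} {P : Type*} [AddCommGroup P] [Module R P]

variable (R P) in
lemma exists_dual_basis [Module.Finite R P] [Module.Projective R P] :
    ∃ (n : ℕ) (e : Fin n → P) (f : Fin n → Module.Dual R P), ∀ x, ∑ j, f j x • e j = x := by
  obtain ⟨n, F, G, -, -, hFG⟩ := Module.Finite.exists_comp_eq_id_of_projective R P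
  refine ⟨n, fun j ↦ F (Pi.single j 1), fun j ↦ LinearMap.proj j ∘ₗ G, fun x ↦ ?_⟩
  calc ∑ j, G x j • F (Pi.single j 1) = F (∑ j, G x j • Pi.single j 1) := by
        simp only [map_sum, map_smul]
    _ = F (G x) := by rw [← pi_eq_sum_univ']
    _ = x := LinearMap.congr_fun hFG x

lemma sum_smulRight_apply_eq {C : Type*} [AddCommGroup C] [Module R C] {ι : Type*} [Fintype ι]
    {e : ι → P} {f : ι → Module.Dual R P} (h : ∀ x, ∑ j, f j x • e j = x) (φ : P →ₗ[R] C) :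
    ∑ j, (f j).smulRight (φ (e j)) = φ := by
  ext x
  rw [← congrArg φ (h x)]
  simp only [LinearMap.sum_apply, LinearMap.smulRight_apply, map_sum, map_smul]

end DualBasis

section FiniteProjective

variable {R} (P : Type u) [AddCommGroup P] [Module R P] [Module.Finite R P] [Module.Projective R P]
  {C X : ModuleCat.{u} R}

lemma bidualityMap_surjective
    (hC : Function.Surjective fun r : R ↦ (r • LinearMap.id : C →ₗ[R] C)) :
    Function.Surjective (bidualityMap R C (.of R P)) := by
  obtain ⟨n, e, f, h⟩ := exists_dual_basis R P
  intro Φ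
  choose r hr using fun j ↦ hC (Φ ∘ₗ LinearMap.smulRightₗ (f j))
  have hΦ (j : Fin n) (c : C) : Φ ((f j).smulRight c) = r j • c :=
    (LinearMap.congr_fun (hr j) c).symm
  refine ⟨∑ j, r j • e j, LinearMap.ext fun φ ↦ ?_⟩
  calc φ (∑ j, r j • e j) = ∑ j, r j • φ (e j) := by simp only [map_sum, map_smul]
    _ = Φ (∑ j, (f j).smulRight (φ (e j))) := by simp only [map_sum, hΦ]
    _ = Φ φ := by rw [sum_smulRight_apply_eq h]

lemma IsExtAcyclic.tensorProduct (hX : IsExtAcyclic C X) : IsExtAcyclic C (P ⊗[R] X) := by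
  obtain ⟨n, e, f, h⟩ := exists_dual_basis R P
  refine hX.of_sum_comp_eq_id
    (fun j ↦ (TensorProduct.lid R X).toLinearMap ∘ₗ (f j).rTensor X)
    (fun j ↦ TensorProduct.mk R P X (e j)) ?_
  ext p x
  simp only [TensorProduct.AlgebraTensorModule.curry_apply, TensorProduct.curry_apply,
    LinearMap.restrictScalars_self, LinearMap.sum_apply, LinearMap.comp_apply,
    LinearMap.rTensor_tmul, LinearEquiv.coe_coe, TensorProduct.lid_tmul, TensorProduct.mk_apply,
    ← TensorProduct.smul_tmul, ← TensorProduct.sum_tmul, h, LinearMap.id_apply]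

lemma IsExtAcyclic.linearMap (hX : IsExtAcyclic C X) : IsExtAcyclic C (P →ₗ[R] X) := fun i hi ↦
  (extMCongr (dualTensorHomEquiv R P X) C i).subsingleton_congr.1
    (hX.tensorProduct (Module.Dual R P) i hi)

end FiniteProjective

section TensorInjective

variable {R}

lemma rTensor_lTensor_apply {A B M N : Type*} [AddCommGroup A] [Module R A] [AddCommGroup B]
    [Module R B] [AddCommGroup M] [Module R M] [AddCommGroup N] [Module R N] (f : A →ₗ[R] B)
    (g : M →ₗ[R] N) (x : A ⊗[R] M) :
    f.rTensor N (g.lTensor A x) = g.lTensor B (f.rTensor M x) :=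
  LinearMap.congr_fun
    ((LinearMap.rTensor_comp_lTensor A f g).trans (LinearMap.lTensor_comp_rTensor A f g).symm) x

variable {K Q C L P T : Type*} [AddCommGroup K] [Module R K] [AddCommGroup Q] [Module R Q]
  [AddCommGroup C] [Module R C] [AddCommGroup L] [Module R L] [AddCommGroup P] [Module R P]
  [AddCommGroup T] [Module R T]

/-- With `Q` flat, both kernels are `Tor_1(T, C)`. -/
lemma rTensor_injective_of_lTensor_injective [Module.Flat R Q] {k : K →ₗ[R] Q} {ε : Q →ₗ[R] C}
    (hε : Function.Surjective ε) (hkε : Function.Exact k ε)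
    (hT : Function.Injective (k.lTensor T)) {j : L →ₗ[R] P} {q : P →ₗ[R] T}
    (hj : Function.Injective j) (hq : Function.Surjective q) (hjq : Function.Exact j q) :
    Function.Injective (j.rTensor C) := by
  refine (injective_iff_map_eq_zero _).2 fun x hx ↦ ?_
  obtain ⟨y, rfl⟩ := LinearMap.lTensor_surjective L hε x
  rw [rTensor_lTensor_apply] at hx
  obtain ⟨z, hz⟩ := (lTensor_exact P hkε hε _).1 hx
  have hqz : q.rTensor K z = 0 := hT <| by
    rw [← rTensor_lTensor_apply, hz, map_zero]
    exact (rTensor_exact Q hjq hq).apply_apply_eq_zero y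
  obtain ⟨v, rfl⟩ := (rTensor_exact K hjq hq _).1 hqz
  have hv : k.lTensor L v = y :=
    Module.Flat.rTensor_preserves_injective_linearMap j hj <| by rw [rTensor_lTensor_apply, hz]
  rw [← hv]
  exact (lTensor_exact L hkε hε).apply_apply_eq_zero v

lemma lTensor_injective_of_exact {Q₂ Q₁ : Type*} [AddCommGroup Q₂] [Module R Q₂]
    [AddCommGroup Q₁] [Module R Q₁] {d₂ : Q₂ →ₗ[R] Q₁} {p : Q₁ →ₗ[R] K} {k : K →ₗ[R] Q}
    (hp : Function.Surjective p) (hpd : p ∘ₗ d₂ = 0)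
    (hT : Function.Exact (d₂.lTensor T) ((k ∘ₗ p).lTensor T)) :
    Function.Injective (k.lTensor T) := by
  refine (injective_iff_map_eq_zero _).2 fun x hx ↦ ?_
  obtain ⟨y, rfl⟩ := LinearMap.lTensor_surjective T hp x
  rw [← LinearMap.lTensor_comp_apply] at hx
  obtain ⟨z, rfl⟩ := (hT y).1 hx
  rw [← LinearMap.lTensor_comp_apply, hpd, LinearMap.lTensor_zero, LinearMap.zero_apply]

end TensorInjective

section Tor

variable {R} {L P : Type u} [AddCommGroup L] [Module R L] [AddCommGroup P] [Module R P]
  {T C : ModuleCat.{u} R}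

lemma exact_lTensor_of_subsingleton_torM (Q : ProjectiveResolution C)
    (hT : Subsingleton (TorM R T C 1)) :
    Function.Exact ((Q.complex.d 2 1).hom.lTensor T) ((Q.complex.d 1 0).hom.lTensor T) := by
  let F := (MonoidalCategory.tensoringLeft (ModuleCat.{u} R)).obj T
  have hF : ((F.mapHomologicalComplex _).obj Q.complex).ExactAt 1 :=
    (HomologicalComplex.exactAt_iff_isZero_homology _ _).2 <|
      (ModuleCat.isZero_of_subsingleton (TorM R T C 1)).of_iso (Q.isoLeftDerivedObj F 1).symm
  rw [HomologicalComplex.exactAt_iff' _ 2 1 0 (by simp) (by simp)] at hF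
  exact (ShortComplex.ShortExact.moduleCat_exact_iff_function_exact _).1 hF

lemma rTensor_injective_of_subsingleton_torM (hT : Subsingleton (TorM R T C 1)) {j : L →ₗ[R] P}
    {q : P →ₗ[R] T} (hj : Function.Injective j) (hq : Function.Surjective q)
    (hjq : Function.Exact j q) : Function.Injective (j.rTensor C) := by
  let Q := projectiveResolution C
  let d₁ := (Q.complex.d 1 0).hom
  have : Module.Projective R (Q.complex.X 0) := (IsProjective.iff_projective _).2 (Q.projective 0)
  have hε : Function.Surjective (Q.π.f 0).hom := (ModuleCat.epi_iff_surjective _).1 inferInstance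
  have hdε : Function.Exact d₁ (Q.π.f 0).hom :=
    (ShortComplex.ShortExact.moduleCat_exact_iff_function_exact _).1 Q.exact₀
  have hdd : d₁.rangeRestrict ∘ₗ (Q.complex.d 2 1).hom = 0 := LinearMap.ext fun x ↦
    Subtype.ext <| ConcreteCategory.congr_hom (Q.complex.d_comp_d 2 1 0) x
  have hk : Function.Injective (d₁.range.subtype.lTensor T) :=
    lTensor_injective_of_exact d₁.surjective_rangeRestrict hdd
      (exact_lTensor_of_subsingleton_torM Q hT)
  refine rTensor_injective_of_lTensor_injective hε ?_ hk hj hq hjq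
  exact LinearMap.exact_iff.2 ((LinearMap.exact_iff.1 hdε).trans d₁.range.range_subtype.symm)

end Tor

section DualCokerOfExact

variable {R} {A B D : Type u} [AddCommGroup A] [Module R A] [AddCommGroup B] [Module R B]
  [AddCommGroup D] [Module R D] {C : ModuleCat.{u} R} {f : A →ₗ[R] B} {g : B →ₗ[R] D}

/-- The left exactness of `Hom(-, C)`: the quotient `Hom(B, C) / Hom(D, C)` embeds into
`Hom(A, C)`. -/
def dualCokerEquivRange (C : ModuleCat.{u} R) (hfg : Function.Exact f g)
    (hg : Function.Surjective g) : DualCoker C g ≃ₗ[R] LinearMap.range (LinearMap.lcomp R C f) :=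
  Submodule.quotEquivOfEq _ _
      (LinearMap.exact_iff.1 (LinearMap.exact_lcomp_of_exact_of_surjective C hfg hg)).symm ≪≫ₗ
    (LinearMap.lcomp R C f).quotKerEquivRange

/-- Dimension shifting along `0 → Hom(B, C) / Hom(D, C) → Hom(A, C) → DualCoker C f → 0`. -/
def extDualCokerShiftEquiv (hfg : Function.Exact f g) (hg : Function.Surjective g)
    (hA : IsExtAcyclic C (A →ₗ[R] C)) (i : ℕ) :
    ExtM R (.of R (DualCoker C g)) C (i + 1) ≃ₗ[R] ExtM R (.of R (DualCoker C f)) C (i + 2) :=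
  extMCongr (dualCokerEquivRange C hfg hg) C (i + 1) ≪≫ₗ
    extShiftEquiv (Submodule.subtype_injective _) (Submodule.mkQ_surjective _)
      (LinearMap.exact_subtype_mkQ _) hA i

section ShortExact

variable (hf : Function.Injective f) (hg : Function.Surjective g) (hfg : Function.Exact f g)
  (hB : Subsingleton (ExtM R (.of R B) C 1))

/-- The case of `extDualCokerShiftEquiv` where `DualCoker C f` is an `Ext` module. -/
def extDualCokerEquivExtExt (hA : IsExtAcyclic C (A →ₗ[R] C)) (i : ℕ) :
    ExtM R (.of R (DualCoker C g)) C (i + 1) ≃ₗ[R]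
      ExtM R (ExtM R (.of R D) C 1) C (i + 2) :=
  extDualCokerShiftEquiv hfg hg hA i ≪≫ₗ
    extMCongr (dualCokerEquivExtOne hf hg hfg hB) C (i + 2)

include hf hg hfg hB in
lemma range_lcomp_eq_top (hD : Subsingleton (ExtM R (.of R D) C 1)) :
    LinearMap.range (LinearMap.lcomp R C f) = ⊤ :=
  Submodule.Quotient.subsingleton_iff.1
    ((dualCokerEquivExtOne hf hg hfg hB).subsingleton_congr.2 hD)

/-- Exactness of `0 → Hom(D, C) → Hom(B, C) → Hom(A, C) → 0` when `Ext^1(D, C) = 0`. -/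
def dualCokerEquivDual (hD : Subsingleton (ExtM R (.of R D) C 1)) :
    DualCoker C g ≃ₗ[R] A →ₗ[R] C :=
  dualCokerEquivRange C hfg hg ≪≫ₗ .ofTop _ (range_lcomp_eq_top hf hg hfg hB hD)

end ShortExact

end DualCokerOfExact

section Transpose

variable {R}

lemma map_dualTensorHomEquiv_range {P₁ P₀ : Type*} [AddCommGroup P₁] [Module R P₁]
    [Module.Finite R P₁] [Module.Projective R P₁] [AddCommGroup P₀] [Module R P₀]
    [Module.Finite R P₀] [Module.Projective R P₀] (C : Type*) [AddCommGroup C] [Module R C]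
    (d : P₁ →ₗ[R] P₀) :
    (LinearMap.range ((LinearMap.lcomp R R d).rTensor C)).map
      (dualTensorHomEquiv R P₁ C).toLinearMap = LinearMap.range (LinearMap.lcomp R C d) :=
  calc _ = LinearMap.range (dualTensorHom R P₁ C ∘ₗ d.dualMap.rTensor C) :=
        (LinearMap.range_comp _ _).symm
    _ = LinearMap.range (d.lcomp R C ∘ₗ (dualTensorHomEquiv R P₀ C).toLinearMap) :=
        congrArg _ (dualTensorHom_comp_rTensor_dualMap d)
    _ = LinearMap.range (d.lcomp R C) :=
        LinearMap.range_comp_of_range_eq_top _ (dualTensorHomEquiv R P₀ C).range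

/-- The isomorphism `Tr M ⊗ C ≅ Tr_C M` for a finite projective presentation `d` of `M`. -/
def dualCokerTensorEquiv {P₁ P₀ : Type*} [AddCommGroup P₁] [Module R P₁] [Module.Finite R P₁]
    [Module.Projective R P₁] [AddCommGroup P₀] [Module R P₀] [Module.Finite R P₀]
    [Module.Projective R P₀] (C : Type*) [AddCommGroup C] [Module R C] (d : P₁ →ₗ[R] P₀) :
    DualCoker R d ⊗[R] C ≃ₗ[R] DualCoker C d :=
  (rTensor.equiv C (LinearMap.exact_map_mkQ_range (LinearMap.lcomp R R d))
      (Submodule.mkQ_surjective _)).symm ≪≫ₗ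
    Submodule.Quotient.equiv _ _ (dualTensorHomEquiv R P₁ C)
      (map_dualTensorHomEquiv_range C d)

variable {L P T P₁ P₀ M : Type u} [AddCommGroup L] [Module R L] [AddCommGroup P] [Module R P]
  [Module.Finite R P] [Module.Projective R P] [AddCommGroup T] [Module R T] [AddCommGroup P₁]
  [Module R P₁] [Module.Finite R P₁] [Module.Projective R P₁] [AddCommGroup P₀] [Module R P₀]
  [Module.Finite R P₀] [Module.Projective R P₀] [AddCommGroup M] [Module R M]
  {C : ModuleCat.{u} R}

/-- If `P₁ → P₀ → M → 0` is a presentation with transpose `T` and `L` is a syzygy of `T`, then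
`0 → L ⊗ C → P ⊗ C → T ⊗ C → 0` and `0 → Hom(P₀, C) / Hom(M, C) → Hom(P₁, C) → T ⊗ C → 0` are
exact, so the higher `Ext` modules of their first terms agree. -/
def extTensorEquivExtDualCoker (hC : IsExtAcyclic C C) {d : P₁ →ₗ[R] P₀} {π : P₀ →ₗ[R] M}
    (hdπ : Function.Exact d π) (hπ : Function.Surjective π) (eT : T ≃ₗ[R] DualCoker R d)
    (hT : Subsingleton (TorM R (.of R T) C 1)) {j : L →ₗ[R] P} {q : P →ₗ[R] T}
    (hj : Function.Injective j) (hq : Function.Surjective q) (hjq : Function.Exact j q) (i : ℕ) :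
    ExtM R (.of R (L ⊗[R] C)) C (i + 1) ≃ₗ[R] ExtM R (.of R (DualCoker C π)) C (i + 1) :=
  extShiftEquiv (rTensor_injective_of_subsingleton_torM hT hj hq hjq)
      (LinearMap.rTensor_surjective C hq) (rTensor_exact C hjq hq) (hC.tensorProduct P) i ≪≫ₗ
    extMCongr (eT.rTensor C ≪≫ₗ dualCokerTensorEquiv C d) C (i + 2) ≪≫ₗ
    (extDualCokerShiftEquiv hdπ hπ (hC.linearMap P₁) i).symm

end Transpose

section WeaklyReflexive

variable {R} {C : ModuleCat.{u} R} {X Y M : Type u} [AddCommGroup X] [Module R X]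
  [AddCommGroup Y] [Module R Y] [AddCommGroup M] [Module R M]

/-- The common properties of totally `C`-reflexive modules and finite projective modules from which
`Ext(Hom(X, C) / Hom(M, C), C)` can be computed for every quotient `M` of `X`. -/
structure IsWeaklyReflexive (C : ModuleCat.{u} R) (X : Type u) [AddCommGroup X] [Module R X] :
    Prop where
  surjective : Function.Surjective (bidualityMap R C (.of R X))
  isExtAcyclic_dual : IsExtAcyclic C (X →ₗ[R] C)

lemma IsTotallyCReflexive.isWeaklyReflexive {X : ModuleCat.{u} R}
    (hX : IsTotallyCReflexive R C X) : IsWeaklyReflexive C X :=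
  ⟨hX.2.1.2, hX.2.2.2⟩

lemma isWeaklyReflexive_of_projective [Module.Finite R X] [Module.Projective R X]
    (hC : Function.Surjective fun r : R ↦ (r • LinearMap.id : C →ₗ[R] C))
    (hCC : IsExtAcyclic C C) : IsWeaklyReflexive C X :=
  ⟨bidualityMap_surjective X hC, hCC.linearMap X⟩

variable {g : X →ₗ[R] M} {h : Y →ₗ[R] M}

lemma range_bidualityMap_eq (hg : Function.Surjective g)
    (hX : Function.Surjective (bidualityMap R C (.of R X))) :
    LinearMap.range (bidualityMap R C (.of R M)) =
      LinearMap.range (LinearMap.lcomp R C (LinearMap.lcomp R C g)) := by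
  have naturality : bidualityMap R C (.of R M) ∘ₗ g =
      LinearMap.lcomp R C (LinearMap.lcomp R C g) ∘ₗ bidualityMap R C (.of R X) := rfl
  rw [← LinearMap.range_comp_of_range_eq_top _ (LinearMap.range_eq_top.2 hg), naturality,
    LinearMap.range_comp_of_range_eq_top _ (LinearMap.range_eq_top.2 hX)]

/-- The cokernel of the biduality map as an `Ext` module. -/
def bidualityCokerEquivExt (hg : Function.Surjective g) (hX : IsWeaklyReflexive C X) :
    (((M →ₗ[R] C) →ₗ[R] C) ⧸ LinearMap.range (bidualityMap R C (.of R M))) ≃ₗ[R]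
      ExtM R (.of R (DualCoker C g)) C 1 :=
  Submodule.quotEquivOfEq _ _ (range_bidualityMap_eq hg hX.surjective) ≪≫ₗ
    dualCokerEquivExtOne (LinearMap.lcomp_injective_of_surjective g hg)
      (Submodule.mkQ_surjective _) (LinearMap.exact_map_mkQ_range _)
      (hX.isExtAcyclic_dual 1 one_pos)

/-- Dimension shifting along `0 → Hom(M, C) → Hom(X, C) → DualCoker C g → 0`. -/
def extDualEquivExtDualCoker (hg : Function.Surjective g) (hX : IsExtAcyclic C (X →ₗ[R] C))
    (i : ℕ) :
    ExtM R (.of R (M →ₗ[R] C)) C (i + 1) ≃ₗ[R] ExtM R (.of R (DualCoker C g)) C (i + 2) :=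
  extShiftEquiv (LinearMap.lcomp_injective_of_surjective g hg) (Submodule.mkQ_surjective _)
    (LinearMap.exact_map_mkQ_range _) hX i

/-- The higher `Ext` modules of `Hom(X, C) / Hom(M, C)` depend only on `M`. -/
def extDualCokerCongr (hg : Function.Surjective g) (hX : IsWeaklyReflexive C X)
    (hh : Function.Surjective h) (hY : IsWeaklyReflexive C Y) :
    ∀ i : ℕ, ExtM R (.of R (DualCoker C g)) C (i + 1) ≃ₗ[R]
      ExtM R (.of R (DualCoker C h)) C (i + 1)
  | 0 => (bidualityCokerEquivExt hg hX).symm ≪≫ₗ bidualityCokerEquivExt hh hY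
  | i + 1 => (extDualEquivExtDualCoker hg hX.isExtAcyclic_dual i).symm ≪≫ₗ
      extDualEquivExtDualCoker hh hY.isExtAcyclic_dual i

end WeaklyReflexive

section GCDimension

variable {R} {C : ModuleCat.{u} R}

theorem nonempty_extDualCoker_equiv_extExt (n : ℕ) :
    ∀ {M : ModuleCat.{u} R}, gcdimLE R C (n + 1) M →
      (∀ j : ℕ, j < n → Subsingleton (ExtM R M C (j + 1))) →
      ∀ {X : Type u} [AddCommGroup X] [Module R X] {g : X →ₗ[R] M}, Function.Surjective g →
        IsWeaklyReflexive C X → ∀ i : ℕ,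
          Nonempty (ExtM R (.of R (DualCoker C g)) C (i + 1) ≃ₗ[R]
            ExtM R (ExtM R M C (n + 1)) C (i + 1 + (n + 1))) := by
  induction n with
  | zero =>
    rintro M ⟨X₀, K, f, g₀, hf, hg₀, hker, hX₀, hK⟩ - X _ _ g hg hX i
    exact ⟨extDualCokerCongr hg hX hg₀ hX₀.isWeaklyReflexive i ≪≫ₗ
      extDualCokerEquivExtExt hf hg₀ (LinearMap.exact_iff.2 hker) (hX₀.2.2.1 1 one_pos)
        hK.2.2.2 i⟩
  | succ n ih =>
    rintro M ⟨X₀, K, f, g₀, hf, hg₀, hker, hX₀, hK⟩ hM X _ _ g hg hX i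
    have hfg : Function.Exact f g₀ := LinearMap.exact_iff.2 hker
    have hKM (j : ℕ) : ExtM R K C (j + 1) ≃ₗ[R] ExtM R M C (j + 2) :=
      extShiftEquiv hf hg₀ hfg hX₀.2.2.1 j
    have hExtK (j : ℕ) (hj : j < n) : Subsingleton (ExtM R K C (j + 1)) :=
      (hKM j).subsingleton_congr.2 (hM (j + 1) (Nat.succ_lt_succ hj))
    obtain ⟨X₁, -, -, g₁, -, hg₁, -, hX₁, -⟩ := id hK
    obtain ⟨e⟩ := ih hK hExtK hg₁ hX₁.isWeaklyReflexive (i + 1)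
    rw [show i + 1 + (n + 1 + 1) = i + 1 + 1 + (n + 1) by lia]
    exact ⟨extDualCokerCongr hg hX hg₀ hX₀.isWeaklyReflexive i ≪≫ₗ
      extMCongr (dualCokerEquivDual hf hg₀ hfg (hX₀.2.2.1 1 one_pos) (hM 0 n.succ_pos)) C
        (i + 1) ≪≫ₗ
      extDualEquivExtDualCoker hg₁ hX₁.2.2.2 i ≪≫ₗ e ≪≫ₗ extMCongr (hKM n) C _⟩

lemma gcdimLE_of_gcdim_eq {M : ModuleCat.{u} R} {n : ℕ} (h : gcdim R C M = n) :
    gcdimLE R C n M := by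
  have hne : ((fun n : ℕ ↦ (n : ℕ∞)) '' {n | gcdimLE R C n M}).Nonempty := by
    rw [Set.nonempty_iff_ne_empty]
    intro hempty
    rw [gcdim, hempty, sInf_empty] at h
    exact ENat.top_ne_natCast n h
  obtain ⟨m, hm, hmn⟩ := csInf_mem hne
  exact Nat.cast_injective (hmn.trans h) ▸ hm

lemma one_le_rgrade (C M : ModuleCat.{u} R) : 1 ≤ rgrade R C M := by
  refine le_sInf ?_
  rintro _ ⟨i, ⟨hi, -⟩, rfl⟩
  exact Nat.one_le_cast.2 hi

lemma subsingleton_extM_of_lt_rgrade {M : ModuleCat.{u} R} {j : ℕ} (hj : 0 < j)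
    (hlt : (j : ℕ∞) < rgrade R C M) : Subsingleton (ExtM R M C j) := by
  by_contra h
  exact hlt.not_ge (sInf_le ⟨j, ⟨hj, h⟩, rfl⟩)

end GCDimension

theorem statement5_general {C M : ModuleCat.{u} R}
    (hC : Function.Surjective fun r : R ↦ (r • LinearMap.id : C →ₗ[R] C))
    (hCC : IsExtAcyclic C C) {n : ℕ} (hn : 0 < n) (hdim : gcdimLE R C n M)
    (hgrade : (n : ℕ∞) ≤ rgrade R C M) {P₁ P₀ T P L : Type u}
    [AddCommGroup P₁] [Module R P₁] [Module.Finite R P₁] [Module.Projective R P₁]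
    [AddCommGroup P₀] [Module R P₀] [Module.Finite R P₀] [Module.Projective R P₀]
    [AddCommGroup T] [Module R T] [AddCommGroup L] [Module R L]
    [AddCommGroup P] [Module R P] [Module.Finite R P] [Module.Projective R P]
    {d : P₁ →ₗ[R] P₀} {π : P₀ →ₗ[R] M} (hdπ : Function.Exact d π) (hπ : Function.Surjective π)
    (eT : T ≃ₗ[R] DualCoker R d) (htor : Subsingleton (TorM R (.of R T) C 1))
    {j : L →ₗ[R] P} {q : P →ₗ[R] T} (hj : Function.Injective j) (hq : Function.Surjective q)
    (hjq : Function.Exact j q) {i : ℕ} (hi : 0 < i) :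
    Nonempty (ExtM R (.of R (L ⊗[R] C)) C i ≃ₗ[R] ExtM R (ExtM R M C n) C (i + n)) := by
  obtain ⟨n, rfl⟩ := Nat.exists_eq_add_one.2 hn
  obtain ⟨i, rfl⟩ := Nat.exists_eq_add_one.2 hi
  have hExt (j : ℕ) (hj : j < n) : Subsingleton (ExtM R M C (j + 1)) :=
    subsingleton_extM_of_lt_rgrade j.succ_pos
      ((Nat.cast_lt.2 (Nat.succ_lt_succ hj)).trans_le hgrade)
  obtain ⟨e⟩ := nonempty_extDualCoker_equiv_extExt n hdim hExt hπ
    (isWeaklyReflexive_of_projective hC hCC) i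
  exact ⟨extTensorEquivExtDualCoker hCC hdπ hπ eT htor hj hq hjq i ≪≫ₗ e⟩

/-- if `M` is reduced `G_C`-perfect of `G_C`-dimension `n` and
`Tor_1^R(Tr(M), C) = 0`, then
`Ext_R^i(λM ⊗ C, C) ≅ Ext_R^{i+n}(Ext_R^n(M,C), C)` for all `i > 0`. -/
theorem statement5 [IsNoetherianRing R] (hsp : IsSemiperfectRing R)
    (C : ModuleCat.{u} R) (hC : IsSemidualizing R C)
    (M : ModuleCat.{u} R) (hMfin : Module.Finite R ↥M)
    (n : ℕ) (hred : IsReducedGCPerfect R C M) (hdim : gcdim R C M = n)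
    (htor : ∀ T : ModuleCat.{u} R, IsTranspose R M T →
      Subsingleton (TorM R T C 1)) :
    ∀ L : ModuleCat.{u} R, IsLambda R M L →
      ∀ i : ℕ, 0 < i →
        Nonempty (↥(ExtM R (ModuleCat.of R (↥L ⊗[R] ↥C)) C i) ≃ₗ[R]
          ↥(ExtM R (ExtM R M C n) C (i + n))) := by
  rintro L ⟨T, hT, P, q, _, ⟨_, hq, -⟩, ⟨eL⟩⟩ i hi
  obtain ⟨P₁, P₀, d, π, ⟨_, _, ⟨_, hπ, -⟩, hd, _, -⟩, ⟨eT⟩⟩ := id hT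
  have hn : rgrade R C M = n := hred.2.trans hdim
  have hinj : Function.Injective ((LinearMap.ker q).subtype ∘ₗ eL.toLinearMap) :=
    (LinearMap.ker q).subtype_injective.comp eL.injective
  have hexact : Function.Exact ((LinearMap.ker q).subtype ∘ₗ eL.toLinearMap) q := by
    rw [LinearMap.exact_iff, LinearMap.range_comp_of_range_eq_top _ eL.range,
      Submodule.range_subtype]
  exact statement5_general R hC.2.1.2 hC.2.2 (Nat.one_le_cast.1 (hn ▸ one_le_rgrade C M))
    (gcdimLE_of_gcdim_eq hdim) hn.ge (LinearMap.exact_iff.2 hd.symm) hπ eT (htor T hT) hinj hq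
    hexact hi

end
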